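/- Suppose the residue field k has characteristic p ≥ 0. Let ℓ be a prime number and let L₁, L₂ ⊆ K̄ be finite separable extensions of K with [L₁:K] > 1 and [L₂:K] > 1, both of which are powers of ℓ. If L₁ and L₂ are linearly disjoint over K, i.e. [L₁L₂:K] = [L₁:K]·[L₂:K], then ℓ = p (in particular p > 0, and both extensions are wildly ramified). -/

import Mathlib

/-!
Let `N / K` be finite Galois with an invariant valuation whose residue field is that of `K`. Then
`(σ, x) ↦ σ x / x` induces a pairing of `Gal(N/K)` with `Nˣ`, valued in the units of the residue
field and trivial on valuation units and on `Kˣ`. Its left kernel, the wild inertia group, contains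
no element `σ` of prime order `q` when `q` is a valuation unit: for `y = σ x - x ≠ 0` the sum
`∑ i < q, σ ^ i y` vanishes, although its `q` terms are all congruent to `y`. For rational values,
`Nˣ` modulo valuation units and `Kˣ` is a subquotient of `ℚ` of finite exponent, hence cyclic, so
the tame quotient embeds into the roots of unity of the residue field and is cyclic too.

Wild inertia, being normal, lies in every subgroup whose index is prime to its order, and subgroups
of a cyclic group are ordered by divisibility of their indices. Hence extensions of degrees `ℓ ^ a`
and `ℓ ^ b` are nested as soon as `ℓ` is a valuation unit, and nested extensions of degree greater
than one are not linearly disjoint.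
-/

open scoped WithZero

section Group

variable {G : Type*} [Group G]

theorem relIndex_dvd_index_of_normal_right (H P : Subgroup G) [P.Normal] [P.FiniteIndex] :
    H.relIndex P ∣ H.index := by
  obtain ⟨u, hu⟩ := P.relIndex_dvd_index_of_normal H
  have hs : P.relIndex H ≠ 0 := left_ne_zero_of_mul (hu ▸ Subgroup.FiniteIndex.index_ne_zero)
  refine ⟨u, mul_left_cancel₀ hs ?_⟩
  calc P.relIndex H * H.index = (P ⊓ H).index := by
        rw [← Subgroup.inf_relIndex_right, Subgroup.relIndex_mul_index inf_le_right]
    _ = H.relIndex P * P.index := by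
        rw [inf_comm, ← Subgroup.inf_relIndex_right, Subgroup.relIndex_mul_index inf_le_right]
    _ = P.relIndex H * (H.relIndex P * u) := by rw [hu, mul_left_comm]

theorem le_of_normal_of_coprime_card_index {H P : Subgroup G} [P.Normal] [P.FiniteIndex]
    (h : (Nat.card P).Coprime H.index) : P ≤ H :=
  Subgroup.relIndex_eq_one.mp <| Nat.eq_one_of_dvd_coprimes h (H.relIndex_dvd_card P) <|
    relIndex_dvd_index_of_normal_right H P

theorem zpow_mem_iff_index_dvd {g : G} (hg : ∀ x, x ∈ Subgroup.zpowers g) (D : Subgroup G)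
    [D.Normal] (k : ℤ) : g ^ k ∈ D ↔ (D.index : ℤ) ∣ k := by
  have hgen : ∀ x : G ⧸ D, x ∈ Subgroup.zpowers (g : G ⧸ D) := by
    rintro ⟨x⟩
    obtain ⟨n, rfl⟩ := hg x
    exact ⟨n, rfl⟩
  rw [← QuotientGroup.eq_one_iff, QuotientGroup.mk_zpow, ← orderOf_dvd_iff_zpow_eq_one,
    orderOf_eq_card_of_forall_mem_zpowers hgen, Subgroup.index]

theorem le_of_index_dvd_index_of_isCyclic [IsCyclic G] {D E : Subgroup G}
    (h : D.index ∣ E.index) : E ≤ D := by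
  let _ : CommGroup G := IsCyclic.commGroup
  obtain ⟨g, hg⟩ := IsCyclic.exists_generator (α := G)
  intro x hx
  obtain ⟨k, rfl⟩ := hg x
  exact (zpow_mem_iff_index_dvd hg D k).mpr <|
    (Int.natCast_dvd_natCast.mpr h).trans ((zpow_mem_iff_index_dvd hg E k).mp hx)

theorem le_of_index_dvd_index_of_isCyclic_quotient (P : Subgroup G) [P.Normal] [P.FiniteIndex]
    [IsCyclic (G ⧸ P)] {H₁ H₂ : Subgroup G} (hdvd : H₁.index ∣ H₂.index)
    (hcop : (Nat.card P).Coprime H₂.index) : H₂ ≤ H₁ := by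
  have hker : (QuotientGroup.mk' P).ker = P := QuotientGroup.ker_mk' P
  have index_map {H : Subgroup G} (hP : P ≤ H) : (H.map (QuotientGroup.mk' P)).index = H.index :=
    H.index_map_eq (QuotientGroup.mk'_surjective P) (hker.trans_le hP)
  have hP₁ : P ≤ H₁ := le_of_normal_of_coprime_card_index (hcop.coprime_dvd_right hdvd)
  have hP₂ : P ≤ H₂ := le_of_normal_of_coprime_card_index hcop
  have hmap : H₂.map (QuotientGroup.mk' P) ≤ H₁.map (QuotientGroup.mk' P) :=
    le_of_index_dvd_index_of_isCyclic (by rwa [index_map hP₁, index_map hP₂])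
  rwa [Subgroup.map_le_map_iff', hker, sup_of_le_left hP₁, sup_of_le_left hP₂] at hmap

theorem isCyclic_quotient_of_ker_le [Finite G] {R : Type*} [CommRing R] [IsDomain R]
    (χ : G →* Rˣ) {P : Subgroup G} [P.Normal] (hP : χ.ker ≤ P) : IsCyclic (G ⧸ P) := by
  have : IsCyclic (G ⧸ χ.ker) :=
    isCyclic_of_injective_ringHom ((Units.coeHom R).comp (QuotientGroup.kerLift χ))
      (Units.val_injective.comp (QuotientGroup.kerLift_injective χ))
  exact isCyclic_of_surjective (QuotientGroup.map χ.ker P (MonoidHom.id G) hP) <|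
    QuotientGroup.map_surjective_of_surjective _ _ (MonoidHom.id G)
      (QuotientGroup.mk'_surjective P) hP

end Group

section LocallyCyclic

theorem exists_eq_smul_smul_add_smul (R : Type*) {K : Type*} [CommRing R] [IsDomain R]
    [IsPrincipalIdealRing R] [Field K] [Algebra R K] [IsFractionRing R K] (a b : K) :
    ∃ s t i j : R, a = i • (s • a + t • b) ∧ b = j • (s • a + t • b) := by
  let I : Submodule R K := Submodule.span R {a, b}
  have hI : I.IsPrincipal := FractionalIdeal.isPrincipal
    (⟨I, FractionalIdeal.isFractional_of_fg (Submodule.fg_span (Set.toFinite _))⟩ :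
      FractionalIdeal (nonZeroDivisors R) K)
  obtain ⟨s, t, hst⟩ := Submodule.mem_span_pair.mp hI.generator_mem
  obtain ⟨i, hi⟩ := (hI.mem_iff_eq_smul_generator I (x := a)).mp
    (Submodule.mem_span_of_mem (by simp))
  obtain ⟨j, hj⟩ := (hI.mem_iff_eq_smul_generator I (x := b)).mp
    (Submodule.mem_span_of_mem (by simp))
  exact ⟨s, t, i, j, hst ▸ hi, hst ▸ hj⟩

theorem isCyclic_of_exponentExists_of_forall_exists_zpowers {Q : Type*} [CommGroup Q]
    (hexp : Monoid.ExponentExists Q)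
    (hpair : ∀ x y : Q, ∃ z, x ∈ Subgroup.zpowers z ∧ y ∈ Subgroup.zpowers z) : IsCyclic Q := by
  obtain ⟨x, hx⟩ := Monoid.exists_orderOf_eq_exponent hexp
  refine ⟨x, fun y => ?_⟩
  obtain ⟨z, hxz, hyz⟩ := hpair x y
  have hz : 0 < orderOf z := hexp.orderOf_pos z
  have : Finite (Subgroup.zpowers z) := Nat.finite_of_card_ne_zero (by simpa using hz.ne')
  have hle : Subgroup.zpowers x ≤ Subgroup.zpowers z := Subgroup.zpowers_le.mpr hxz
  have heq : Subgroup.zpowers x = Subgroup.zpowers z :=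
    Subgroup.eq_of_le_of_card_ge hle <| by
      simpa [hx] using Nat.le_of_dvd hexp.exponent_ne_zero.bot_lt (Monoid.order_dvd_exponent z)
  exact Subgroup.mem_zpowers_iff.mp (heq ▸ hyz)

theorem isCyclic_quotient_of_ker_le_of_pow_mem {A : Type*} [CommGroup A]
    (f : A →* Multiplicative ℚ) {S : Subgroup A} (hker : f.ker ≤ S) {n : ℕ} (hn : 0 < n)
    (hpow : ∀ x, x ^ n ∈ S) : IsCyclic (A ⧸ S) := by
  refine isCyclic_of_exponentExists_of_forall_exists_zpowers ⟨n, hn, ?_⟩ ?_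
  · rintro ⟨x⟩
    exact (QuotientGroup.eq_one_iff _).mpr (hpow x)
  rintro ⟨x⟩ ⟨y⟩
  obtain ⟨s, t, i, j, hi, hj⟩ := exists_eq_smul_smul_add_smul ℤ (f x).toAdd (f y).toAdd
  have mem_zpowers {u : A} {k : ℤ} (hu : (f u).toAdd = k • (s • (f x).toAdd + t • (f y).toAdd)) :
      (u : A ⧸ S) ∈ Subgroup.zpowers ((x ^ s * y ^ t : A) : A ⧸ S) := by
    refine ⟨k, QuotientGroup.eq.mpr (hker ?_)⟩
    apply Multiplicative.toAdd.injective
    simp [hu]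
  exact ⟨_, mem_zpowers hi, mem_zpowers hj⟩

end LocallyCyclic

section Valuation

variable {F Γ₀ : Type*} [Field F] [LinearOrderedCommGroupWithZero Γ₀] (w : Valuation F Γ₀)

theorem valuation_intCast_le_one (n : ℤ) : w n ≤ 1 :=
  intCast_mem w.valuationSubring n

theorem valuation_natCast_le_one (n : ℕ) : w n ≤ 1 :=
  natCast_mem w.valuationSubring n

variable {w}

theorem valuation_natCast_eq_one_of_coprime {m n : ℕ} (hmn : m.Coprime n) (hn : w n < 1) :
    w m = 1 := by
  refine (valuation_natCast_le_one w m).antisymm (not_lt.mp fun hm => ?_)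
  have mul_lt_one (c : ℤ) {k : ℕ} (hk : w k < 1) : w (c * k) < 1 := by
    rw [map_mul]
    exact (mul_le_of_le_one_left' (valuation_intCast_le_one w c)).trans_lt hk
  obtain ⟨c, d, hcd⟩ := Nat.isCoprime_iff_coprime.mpr hmn
  have hcd' : (c : F) * m + d * n = 1 := by exact_mod_cast congrArg (Int.cast : ℤ → F) hcd
  have hlt := w.map_add_lt (mul_lt_one c hm) (mul_lt_one d hn)
  rw [hcd', map_one] at hlt
  exact lt_irrefl _ hlt

theorem valuation_natCast_eq_one_of_dvd {m n : ℕ} (hmn : m ∣ n) (hn : w n = 1) : w m = 1 := by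
  obtain ⟨k, rfl⟩ := hmn
  refine (valuation_natCast_le_one w m).antisymm ?_
  rw [← hn, Nat.cast_mul, map_mul]
  exact mul_le_of_le_one_right' (valuation_natCast_le_one w k)

end Valuation

section Tame

variable {K N Γ₀ : Type*} [Field K] [Field N] [Algebra K N] [LinearOrderedCommGroupWithZero Γ₀]
  {w : Valuation N Γ₀} (hinv : ∀ (σ : Gal(N/K)) (x : N), w (σ x) = w x)

/-- The reduction `x ↦ σ x / x` in the residue field of an invariant valuation. -/
noncomputable def residueRatio (σ : Gal(N/K)) :
    Nˣ →* (IsLocalRing.ResidueField w.valuationSubring)ˣ :=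
  w.valuationSubring.unitGroupToResidueFieldUnits.comp <|
    (Units.map (σ : N →* N) / MonoidHom.id Nˣ).codRestrict w.valuationSubring.unitGroup fun x => by
      have hx : w (x : N) ≠ 0 := w.ne_zero_iff.mpr x.ne_zero
      rw [Valuation.mem_unitGroup_iff]
      simp [div_eq_mul_inv, hinv, hx]

theorem residueRatio_eq_one_iff (σ : Gal(N/K)) (x : Nˣ) :
    residueRatio hinv σ x = 1 ↔ w (σ x - x) < w x := by
  have hx : 0 < w (x : N) := w.pos_iff.mpr x.ne_zero
  rw [residueRatio, MonoidHom.comp_apply, ← MonoidHom.mem_ker,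
    ValuationSubring.ker_unitGroupToResidueFieldUnits, Subgroup.mem_comap,
    Subgroup.coe_subtype, ValuationSubring.mem_principalUnitGroup_iff,
    ← w.isEquiv_valuation_valuationSubring.lt_one_iff_lt_one, ← div_lt_one₀ hx, ← map_div₀,
    sub_div, div_self x.ne_zero]
  simp [div_eq_mul_inv]

theorem residueRatio_map_algebraMap (σ : Gal(N/K)) (c : Kˣ) :
    residueRatio hinv σ (Units.map (algebraMap K N).toMonoidHom c) = 1 := by
  simp [residueRatio_eq_one_iff, zero_lt_iff]

theorem residueRatio_eq_one_of_valuation_eq_one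
    (hres : ∀ x, w x ≤ 1 → ∃ c : K, w (x - algebraMap K N c) < 1) (σ : Gal(N/K)) {x : Nˣ}
    (hx : w x = 1) :
    residueRatio hinv σ x = 1 := by
  obtain ⟨c, hc⟩ := hres x hx.le
  have hdiff : σ x - x = σ (x - algebraMap K N c) - (x - algebraMap K N c) := by simp
  rw [residueRatio_eq_one_iff, hx, hdiff]
  exact w.map_sub_lt (by rwa [hinv]) hc

theorem residueRatio_mul
    (hres : ∀ x, w x ≤ 1 → ∃ c : K, w (x - algebraMap K N c) < 1) (σ τ : Gal(N/K)) (x : Nˣ) :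
    residueRatio hinv (σ * τ) x = residueRatio hinv σ x * residueRatio hinv τ x := by
  let y : Nˣ := Units.map (τ : N →* N) x
  have hy : w (y / x : Nˣ) = 1 := by
    have hx : w (x : N) ≠ 0 := w.ne_zero_iff.mpr x.ne_zero
    simp [y, div_eq_mul_inv, hinv, hx]
  have hσ : residueRatio hinv σ y = residueRatio hinv σ x := by
    rw [← div_eq_one, ← map_div, residueRatio_eq_one_of_valuation_eq_one hinv hres σ hy]
  rw [← hσ]
  simp only [residueRatio, MonoidHom.comp_apply, ← map_mul]
  congr 1
  ext
  simp [y]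

variable (hres : ∀ x, w x ≤ 1 → ∃ c : K, w (x - algebraMap K N c) < 1)

/-- The tame pairing `(σ, x) ↦ σ x / x` of the Galois group with the multiplicative group, valued
in the residue field. It is multiplicative in `σ` because residues are represented in `K`. -/
noncomputable def tamePairing :
    Gal(N/K) →* Nˣ →* (IsLocalRing.ResidueField w.valuationSubring)ˣ :=
  MonoidHom.mk' (residueRatio hinv) fun σ τ => MonoidHom.ext (residueRatio_mul hinv hres σ τ)

/-- The wild inertia group, as the kernel of the tame pairing. -/
noncomputable def wildInertia : Subgroup Gal(N/K) :=
  (tamePairing hinv hres).ker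

instance : (wildInertia hinv hres).Normal :=
  inferInstanceAs (tamePairing hinv hres).ker.Normal

theorem mem_wildInertia_iff {σ : Gal(N/K)} :
    σ ∈ wildInertia hinv hres ↔ ∀ x : Nˣ, w (σ x - x) < w x := by
  simp only [← residueRatio_eq_one_iff hinv]
  exact MonoidHom.ext_iff

theorem not_dvd_card_wildInertia [FiniteDimensional K N] {q : ℕ} (hq : q.Prime)
    (hw : w (q : N) = 1) : ¬ q ∣ Nat.card (wildInertia hinv hres) := by
  intro hdvd
  have := Fact.mk hq
  obtain ⟨⟨σ, hσ⟩, hord⟩ := exists_prime_orderOf_dvd_card' q hdvd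
  rw [Subgroup.orderOf_mk] at hord
  obtain ⟨x, hx⟩ : ∃ x, σ x ≠ x := by
    by_contra! h
    rw [show σ = 1 from AlgEquiv.ext h, orderOf_one] at hord
    exact hq.one_lt.ne hord
  let y : Nˣ := Units.mk0 (σ x - x) (sub_ne_zero.mpr hx)
  have hsum : ∑ i ∈ Finset.range q, (σ ^ i) (y : N) = 0 := by
    have (i : ℕ) : (σ ^ i) (y : N) = (σ ^ (i + 1)) x - (σ ^ i) x := by simp [y, pow_succ]
    simp only [this]
    rw [Finset.sum_range_sub (fun i => (σ ^ i) x), ← hord, pow_orderOf_eq_one]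
    simp
  have hlt : w (∑ i ∈ Finset.range q, ((σ ^ i) (y : N) - y)) < w (y : N) :=
    w.map_sum_lt (w.ne_zero_iff.mpr y.ne_zero) fun i _ =>
      (mem_wildInertia_iff hinv hres).mp (pow_mem hσ i) y
  rw [Finset.sum_sub_distrib, hsum, zero_sub, Valuation.map_neg, Finset.sum_const,
    Finset.card_range, nsmul_eq_mul, map_mul, hw, one_mul] at hlt
  exact lt_irrefl _ hlt

theorem coprime_card_wildInertia [FiniteDimensional K N] {m : ℕ} (hm : w (m : N) = 1) :
    (Nat.card (wildInertia hinv hres)).Coprime m :=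
  Nat.coprime_of_dvd fun _ hq hcard hqm =>
    not_dvd_card_wildInertia hinv hres hq (valuation_natCast_eq_one_of_dvd hqm hm) hcard

variable (K w) in
/-- The elements of `N` whose value is attained on `K`, so that `Nˣ ⧸ baseValueUnits K w` is the
quotient of the value groups of `N` and `K`. -/
def baseValueUnits : Subgroup Nˣ :=
  (Units.map (w : N →* Γ₀)).ker ⊔ (Units.map (algebraMap K N).toMonoidHom).range

theorem baseValueUnits_le_ker_tamePairing (σ : Gal(N/K)) :
    baseValueUnits K w ≤ (tamePairing hinv hres σ).ker := by
  refine sup_le (fun x hx => ?_) ?_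
  · exact residueRatio_eq_one_of_valuation_eq_one hinv hres σ (congrArg Units.val hx)
  · rintro _ ⟨c, rfl⟩
    exact residueRatio_map_algebraMap hinv σ c

theorem isCyclic_quotient_wildInertia [Finite Gal(N/K)]
    [IsCyclic (Nˣ ⧸ baseValueUnits K w)] : IsCyclic (Gal(N/K) ⧸ wildInertia hinv hres) := by
  obtain ⟨⟨x₀⟩, hx₀⟩ := IsCyclic.exists_generator (α := Nˣ ⧸ baseValueUnits K w)
  refine isCyclic_quotient_of_ker_le ((MonoidHom.eval x₀).comp (tamePairing hinv hres))
    fun σ (hσ : tamePairing hinv hres σ x₀ = 1) => MonoidHom.ext fun x => ?_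
  obtain ⟨n, hn⟩ := hx₀ x
  have hx : (x₀ ^ n)⁻¹ * x ∈ baseValueUnits K w := QuotientGroup.eq.mp hn
  have hpair := baseValueUnits_le_ker_tamePairing hinv hres σ hx
  rw [MonoidHom.mem_ker, map_mul, map_inv, map_zpow, hσ, one_zpow, inv_one, one_mul] at hpair
  exact hpair

end Tame

section Nested

theorem pow_card_mem_baseValueUnits {K N Γ₀ : Type*} [Field K] [Field N] [Algebra K N]
    [LinearOrderedCommGroupWithZero Γ₀] {w : Valuation N Γ₀} [FiniteDimensional K N] [IsGalois K N]
    (hinv : ∀ (σ : Gal(N/K)) (x : N), w (σ x) = w x) (x : Nˣ) :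
    x ^ Nat.card Gal(N/K) ∈ baseValueUnits K w := by
  let y : Nˣ := Units.map (algebraMap K N).toMonoidHom (Units.map (Algebra.norm K) x)
  have hy : w y = w (x ^ Nat.card Gal(N/K) : Nˣ) := by
    simp [y, Algebra.norm_eq_prod_automorphisms, hinv]
  rw [← div_mul_cancel (x ^ Nat.card Gal(N/K)) y]
  refine Subgroup.mul_mem_sup (MonoidHom.mem_ker.mpr (Units.ext ?_)) ⟨_, rfl⟩
  have hy0 : w (y : N) ≠ 0 := w.ne_zero_iff.mpr y.ne_zero
  rw [Units.coe_map, Units.val_one, MonoidHom.coe_coe, Units.val_div_eq_div_val, map_div₀, ← hy,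
    div_self hy0]

variable {K : Type*} [Field K]

theorem isCyclic_quotient_baseValueUnits {N : Type*} [Field N] [Algebra K N]
    [FiniteDimensional K N] [IsGalois K N] {w : Valuation N ℚᵐ⁰}
    (hinv : ∀ (σ : Gal(N/K)) (x : N), w (σ x) = w x) :
    IsCyclic (Nˣ ⧸ baseValueUnits K w) := by
  refine isCyclic_quotient_of_ker_le_of_pow_mem
    ((↑(WithZero.unitsWithZeroEquiv (α := Multiplicative ℚ)) : ℚᵐ⁰ˣ →* Multiplicative ℚ).comp
      (Units.map (w : N →* ℚᵐ⁰))) ?_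
    Nat.card_pos (pow_card_mem_baseValueUnits hinv)
  rw [MonoidHom.ker_mulEquiv_comp]
  exact le_sup_left

theorem le_of_finrank_dvd_finrank_of_isGalois {N : Type*} [Field N] [Algebra K N]
    [FiniteDimensional K N] [IsGalois K N] {w : Valuation N ℚᵐ⁰}
    (hinv : ∀ (σ : Gal(N/K)) (x : N), w (σ x) = w x)
    (hres : ∀ x, w x ≤ 1 → ∃ c : K, w (x - algebraMap K N c) < 1) {E₁ E₂ : IntermediateField K N}
    (hdvd : Module.finrank K E₁ ∣ Module.finrank K E₂) (htame : w (Module.finrank K E₂ : N) = 1) :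
    E₁ ≤ E₂ := by
  have := isCyclic_quotient_baseValueUnits hinv
  have := isCyclic_quotient_wildInertia hinv hres
  rw [← IsGalois.fixedField_fixingSubgroup E₂, IntermediateField.le_iff_le]
  simp only [IntermediateField.finrank_eq_fixingSubgroup_index] at hdvd htame
  exact le_of_index_dvd_index_of_isCyclic_quotient (wildInertia hinv hres) hdvd
    (coprime_card_wildInertia hinv hres htame)

theorem isSeparable_of_natCast_finrank_ne_zero {L : Type*} [Field L] [Algebra K L]
    (h : (Module.finrank K L : K) ≠ 0) : Algebra.IsSeparable K L := by
  by_contra hsep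
  apply h
  calc (Module.finrank K L : K) = Algebra.trace K L (algebraMap K L 1) := by
        rw [Algebra.trace_algebraMap, nsmul_one]
    _ = 0 := by rw [Algebra.trace_eq_zero_of_not_isSeparable hsep, LinearMap.zero_apply]

variable {M : Type*} [Field M] [Algebra K M]

theorem isGalois_normalClosure (L : IntermediateField K M) [Normal K M] [Algebra.IsSeparable K L] :
    IsGalois K (IntermediateField.normalClosure K L M) := by
  have hle : IntermediateField.normalClosure K L M ≤ separableClosure K M :=
    normalClosure_le_iff.mpr fun i => by
      have : Algebra.IsSeparable K i.fieldRange :=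
        AlgEquiv.Algebra.isSeparable (AlgEquiv.ofInjectiveField i)
      exact le_separableClosure K M _
  have := (le_separableClosure_iff K M _).mp hle
  exact ⟨⟩

theorem finrank_restrict {E N : IntermediateField K M} (h : E ≤ N) :
    Module.finrank K (IntermediateField.restrict h) = Module.finrank K E :=
  (IntermediateField.restrictAlgEquiv h).toLinearEquiv.finrank_eq.symm

theorem le_of_finrank_dvd_finrank [Normal K M] {w : Valuation M ℚᵐ⁰}
    (hinv : ∀ (σ : Gal(M/K)) (x : M), w (σ x) = w x)
    (hres : ∀ x, w x ≤ 1 → ∃ c : K, w (x - algebraMap K M c) < 1) {L₁ L₂ : IntermediateField K M}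
    [FiniteDimensional K L₁] [FiniteDimensional K L₂]
    (hdvd : Module.finrank K L₁ ∣ Module.finrank K L₂) (htame : w (Module.finrank K L₂ : M) = 1) :
    L₁ ≤ L₂ := by
  have isSeparable {L : IntermediateField K M} (hL : w (Module.finrank K L : M) = 1) :
      Algebra.IsSeparable K L := by
    refine isSeparable_of_natCast_finrank_ne_zero fun h0 => ?_
    rw [← map_natCast (algebraMap K M), h0] at hL
    simp at hL
  have := isSeparable htame
  have := isSeparable (valuation_natCast_eq_one_of_dvd hdvd htame)
  let N := IntermediateField.normalClosure K ↥(L₁ ⊔ L₂) M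
  have : IsGalois K N := isGalois_normalClosure _
  have hN : L₁ ⊔ L₂ ≤ N := IntermediateField.le_normalClosure _
  have hN₁ : L₁ ≤ N := le_sup_left.trans hN
  have hN₂ : L₂ ≤ N := le_sup_right.trans hN
  have hle : IntermediateField.restrict hN₁ ≤ IntermediateField.restrict hN₂ :=
    le_of_finrank_dvd_finrank_of_isGalois (w := w.comap (algebraMap N M))
      (fun σ x => by
        rw [Valuation.comap_apply, ← AlgEquiv.liftNormal_commutes σ M x, hinv]; rfl)
      (fun x => hres x)
      (by simpa only [finrank_restrict]) (by simpa [finrank_restrict] using htame)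
  exact fun x hx => (IntermediateField.mem_restrict hN₂ ⟨x, hN₁ hx⟩).mp
    (hle ((IntermediateField.mem_restrict hN₁ ⟨x, hN₁ hx⟩).mpr hx))

theorem finrank_eq_one_of_le_of_finrank_sup {E F : IntermediateField K M} [FiniteDimensional K F]
    (hle : E ≤ F)
    (hdisj : Module.finrank K ↥(E ⊔ F) = Module.finrank K E * Module.finrank K F) :
    Module.finrank K E = 1 := by
  rw [sup_of_le_right hle] at hdisj
  exact (Nat.mul_eq_right Module.finrank_pos.ne').mp hdisj.symm

theorem finrank_eq_one_or_finrank_eq_one_of_finrank_sup [Normal K M] {w : Valuation M ℚᵐ⁰}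
    (hinv : ∀ (σ : Gal(M/K)) (x : M), w (σ x) = w x)
    (hres : ∀ x, w x ≤ 1 → ∃ c : K, w (x - algebraMap K M c) < 1) {L₁ L₂ : IntermediateField K M}
    [FiniteDimensional K L₁] [FiniteDimensional K L₂] {ℓ a b : ℕ} (hℓ : w (ℓ : M) = 1)
    (h₁ : Module.finrank K L₁ = ℓ ^ a) (h₂ : Module.finrank K L₂ = ℓ ^ b)
    (hdisj : Module.finrank K ↥(L₁ ⊔ L₂) = Module.finrank K L₁ * Module.finrank K L₂) :
    Module.finrank K L₁ = 1 ∨ Module.finrank K L₂ = 1 := by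
  wlog hab : a ≤ b generalizing L₁ L₂ a b
  · exact (this h₂ h₁ (by rw [sup_comm, hdisj, mul_comm]) (le_of_not_ge hab)).symm
  refine .inl <|
    finrank_eq_one_of_le_of_finrank_sup (le_of_finrank_dvd_finrank hinv hres ?_ ?_) hdisj
  · rw [h₁, h₂]
    exact pow_dvd_pow ℓ hab
  · rw [h₂, Nat.cast_pow, map_pow, hℓ, one_pow]

end Nested

section RatValuation

variable {M : Type*} [Field M] (v : M → ℚ)
  (hv_mul : ∀ x y : M, x ≠ 0 → y ≠ 0 → v (x * y) = v x + v y)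
  (hv_add : ∀ x y : M, x ≠ 0 → y ≠ 0 → x + y ≠ 0 → min (v x) (v y) ≤ v (x + y))

open scoped Classical in
/-- The multiplicative valuation `x ↦ exp (-v x)` of an additive valuation `v` with rational
values; the value `v 0` is ignored. -/
noncomputable def ratValuation : Valuation M ℚᵐ⁰ where
  toFun x := if x = 0 then 0 else WithZero.exp (-v x)
  map_zero' := if_pos rfl
  map_one' := by
    have h := hv_mul 1 1 one_ne_zero one_ne_zero
    rw [mul_one, left_eq_add] at h
    simp [h]
  map_mul' x y := by
    by_cases hx : x = 0
    · simp [hx]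
    by_cases hy : y = 0
    · simp [hy]
    simp [hx, hy, hv_mul, add_comm, WithZero.exp_add]
  map_add_le_max' x y := by
    by_cases hx : x = 0
    · simp [hx]
    by_cases hy : y = 0
    · simp [hy]
    by_cases hxy : x + y = 0
    · simp [hxy]
    simpa [hx, hy, hxy, -WithZero.exp_neg] using hv_add x y hx hy hxy

variable {v hv_mul hv_add}

theorem ratValuation_apply {x : M} (hx : x ≠ 0) :
    ratValuation v hv_mul hv_add x = WithZero.exp (-v x) :=
  if_neg hx

theorem ratValuation_lt_one_iff {x : M} :
    ratValuation v hv_mul hv_add x < 1 ↔ x = 0 ∨ 0 < v x := by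
  by_cases hx : x = 0
  · simp [hx]
  · rw [ratValuation_apply hx, ← WithZero.exp_zero, WithZero.exp_lt_exp]
    simp [hx]

theorem ratValuation_le_one_iff {x : M} :
    ratValuation v hv_mul hv_add x ≤ 1 ↔ x = 0 ∨ 0 ≤ v x := by
  by_cases hx : x = 0
  · simp [hx]
  · rw [ratValuation_apply hx, ← WithZero.exp_zero, WithZero.exp_le_exp]
    simp [hx]

theorem ratValuation_eq_one_iff {x : M} :
    ratValuation v hv_mul hv_add x = 1 ↔ x ≠ 0 ∧ v x = 0 := by
  by_cases hx : x = 0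
  · simp [hx]
  · rw [ratValuation_apply hx, ← WithZero.exp_zero, WithZero.exp_inj]
    simp [hx]

theorem ratValuation_map {σ : M →+* M} (hσ : ∀ x, v (σ x) = v x) (x : M) :
    ratValuation v hv_mul hv_add (σ x) = ratValuation v hv_mul hv_add x := by
  by_cases hx : x = 0
  · simp [hx]
  · rw [ratValuation_apply hx, ratValuation_apply ((map_ne_zero σ).mpr hx), hσ]

variable {K : Type*} [Field K] [Algebra K M]

theorem exists_ratValuation_sub_lt_one
    (hv_res : ∀ x : M, x ≠ 0 → 0 ≤ v x →
      ∃ η : K, x = algebraMap K M η ∨ 0 < v (x - algebraMap K M η))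
    (x : M) (hx : ratValuation v hv_mul hv_add x ≤ 1) :
    ∃ c : K, ratValuation v hv_mul hv_add (x - algebraMap K M c) < 1 := by
  by_cases hx0 : x = 0
  · exact ⟨0, by simp [hx0]⟩
  obtain ⟨c, hc⟩ := hv_res x hx0 ((ratValuation_le_one_iff.mp hx).resolve_left hx0)
  exact ⟨c, ratValuation_lt_one_iff.mpr (hc.imp_left sub_eq_zero.mpr)⟩

theorem ratValuation_natCast_eq_one_of_prime_of_ne {p ℓ : ℕ}
    (hp : (p = 0 ∧ ∀ q : ℕ, q.Prime → (q : K) ≠ 0 ∧ v (algebraMap K M (q : K)) = 0)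
      ∨ (p.Prime ∧ ((p : K) = 0 ∨ ((p : K) ≠ 0 ∧ 0 < v (algebraMap K M (p : K))))))
    (hℓ : ℓ.Prime) (hne : ℓ ≠ p) : ratValuation v hv_mul hv_add (ℓ : M) = 1 := by
  rcases hp with ⟨-, hunit⟩ | ⟨hp, hmax⟩
  · obtain ⟨hℓ0, hvℓ⟩ := hunit ℓ hℓ
    rw [← map_natCast (algebraMap K M)]
    exact ratValuation_eq_one_iff.mpr ⟨(map_ne_zero _).mpr hℓ0, hvℓ⟩
  · refine valuation_natCast_eq_one_of_coprime ((Nat.coprime_primes hℓ hp).mpr hne) ?_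
    rw [← map_natCast (algebraMap K M)]
    exact ratValuation_lt_one_iff.mpr (hmax.imp (fun h => by rw [h, map_zero]) And.right)

end RatValuation

theorem prime_eq_residue_char_of_linearly_disjoint_general
    {K M : Type*} [Field K] [Field M] [Algebra K M] [Normal K M]
    (v : M → ℚ)
    (hv_mul : ∀ x y : M, x ≠ 0 → y ≠ 0 → v (x * y) = v x + v y)
    (hv_add : ∀ x y : M, x ≠ 0 → y ≠ 0 → x + y ≠ 0 → min (v x) (v y) ≤ v (x + y))
    (hv_gal : ∀ (σ : M ≃ₐ[K] M) (x : M), v (σ x) = v x)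
    (hv_res : ∀ x : M, x ≠ 0 → 0 ≤ v x →
      ∃ η : K, x = algebraMap K M η ∨ 0 < v (x - algebraMap K M η))
    (p : ℕ)
    (hp : (p = 0 ∧ ∀ q : ℕ, q.Prime → (q : K) ≠ 0 ∧ v (algebraMap K M (q : K)) = 0)
        ∨ (p.Prime ∧ ((p : K) = 0 ∨ ((p : K) ≠ 0 ∧ 0 < v (algebraMap K M (p : K))))))
    (ℓ : ℕ) (hℓ : ℓ.Prime)
    (L₁ L₂ : IntermediateField K M) [FiniteDimensional K L₁] [FiniteDimensional K L₂]
    (h1 : 1 < Module.finrank K L₁) (h2 : 1 < Module.finrank K L₂)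
    (hpow1 : ∃ a : ℕ, Module.finrank K L₁ = ℓ ^ a)
    (hpow2 : ∃ a : ℕ, Module.finrank K L₂ = ℓ ^ a)
    (hdisj : Module.finrank K ↥(L₁ ⊔ L₂) = Module.finrank K L₁ * Module.finrank K L₂) :
    ℓ = p := by
  by_contra hne
  obtain ⟨a, ha⟩ := hpow1
  obtain ⟨b, hb⟩ := hpow2
  have hw : ratValuation v hv_mul hv_add (ℓ : M) = 1 :=
    ratValuation_natCast_eq_one_of_prime_of_ne hp hℓ hne
  rcases finrank_eq_one_or_finrank_eq_one_of_finrank_sup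
    (fun σ => ratValuation_map (σ := (σ : M →+* M)) (hv_gal σ))
    (exists_ratValuation_sub_lt_one hv_res) hw ha hb hdisj with h | h
  · exact h1.ne' h
  · exact h2.ne' h

/-- Let `K` be a field, Henselian with respect to a discrete valuation
`ν_K` with algebraically closed residue field `k`, with fixed algebraic closure `Kbar`
and (unique, Galois-invariant) extension `v` of `ν_K`, normalized so that a uniformizer
`πK` satisfies `v πK = 1` and `v` is `ℤ`-valued on `K`; algebraic closedness of the
residue field is expressed by `hv_res`.  Suppose the residue field `k` has
characteristic `p ≥ 0`; this is encoded by `hp`: either `p = 0` and every prime `q`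
is a unit of the valuation ring of `K` (nonzero of valuation `0`), or `p` is prime
and `p` lies in the maximal ideal (it is `0` in `K`, or nonzero of positive
valuation).

Let `ℓ` be a prime number and let `L₁, L₂ ⊆ Kbar` be finite separable extensions of
`K` with `[L₁:K] > 1` and `[L₂:K] > 1`, both of which are powers of `ℓ`.  If `L₁`
and `L₂` are linearly disjoint over `K`, i.e. `[L₁L₂:K] = [L₁:K]·[L₂:K]`, then
`ℓ = p`. -/
theorem prime_eq_residue_char_of_linearly_disjoint
    {K Kbar : Type*} [Field K] [Field Kbar] [Algebra K Kbar] [IsAlgClosure K Kbar]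
    (v : Kbar → ℚ)
    (hv_mul : ∀ x y : Kbar, x ≠ 0 → y ≠ 0 → v (x * y) = v x + v y)
    (hv_add : ∀ x y : Kbar, x ≠ 0 → y ≠ 0 → x + y ≠ 0 → min (v x) (v y) ≤ v (x + y))
    (hv_gal : ∀ (σ : Kbar ≃ₐ[K] Kbar) (x : Kbar), v (σ x) = v x)
    (hv_int : ∀ x : K, x ≠ 0 → ∃ n : ℤ, v (algebraMap K Kbar x) = (n : ℚ))
    (πK : K) (hπK : πK ≠ 0 ∧ v (algebraMap K Kbar πK) = 1)
    (hv_res : ∀ x : Kbar, x ≠ 0 → 0 ≤ v x →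
      ∃ η : K, x = algebraMap K Kbar η ∨ 0 < v (x - algebraMap K Kbar η))
    (p : ℕ)
    (hp : (p = 0 ∧ ∀ q : ℕ, q.Prime →
            (q : K) ≠ 0 ∧ v (algebraMap K Kbar (q : K)) = 0)
        ∨ (p.Prime ∧ ((p : K) = 0 ∨
            ((p : K) ≠ 0 ∧ 0 < v (algebraMap K Kbar ((p : K)))))))
    (ℓ : ℕ) (hℓ : ℓ.Prime)
    (L₁ L₂ : IntermediateField K Kbar)
    [FiniteDimensional K ↥L₁] [FiniteDimensional K ↥L₂]
    [Algebra.IsSeparable K ↥L₁] [Algebra.IsSeparable K ↥L₂]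
    (h1 : 1 < Module.finrank K ↥L₁) (h2 : 1 < Module.finrank K ↥L₂)
    (hpow1 : ∃ a : ℕ, Module.finrank K ↥L₁ = ℓ ^ a)
    (hpow2 : ∃ a : ℕ, Module.finrank K ↥L₂ = ℓ ^ a)
    (hdisj : Module.finrank K ↥(L₁ ⊔ L₂)
        = Module.finrank K ↥L₁ * Module.finrank K ↥L₂) :
    ℓ = p :=
  prime_eq_residue_char_of_linearly_disjoint_general v hv_mul hv_add hv_gal hv_res p hp ℓ hℓ L₁ L₂
    h1 h2 hpow1 hpow2 hdisj
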